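/- Let G be a finite simple graph, let η, d, k, ℓ ∈ ℕ with d ≥ 1, let X ⊆ V(G) and R ⊆ V(G) ∖ X. Let S be an η-treedepth deletion set of G with |S| ≤ k such that |(N_G(C) ∩ X) ∖ S| ≤ η for every connected component C of G[R]. Suppose C₁, …, C_ℓ are connected components of G[R] and H₀ ⊆ H₁ ⊆ ⋯ ⊆ H_ℓ are sets with H₀ = ∅ and H_i = H_{i−1} ∪ (N_G(C_i) ∩ X) for each i ∈ [ℓ], such that |(N_G(C_i) ∩ X) ∖ H_{i−1}| > d + η for every i ∈ [ℓ]. Then ℓ·d ≤ |S| (equivalently, ℓ ≤ |S|/d). -/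

import Mathlib

open SimpleGraph Set

variable {V : Type*}

/-- The connected component of `x` inside the induced subgraph `G[S]`, as a subset of `V`. -/
def compIn (G : SimpleGraph V) (S : Set V) (x : V) : Set V :=
  {y | ∃ (hx : x ∈ S) (hy : y ∈ S), (G.induce S).Reachable ⟨x, hx⟩ ⟨y, hy⟩}

/-- `tdLE G n S` means that the treedepth of the induced subgraph `G[S]` is at most `n`,
following the recursive definition of treedepth: a graph has treedepth at most `n+1`
iff from every connected component one can delete a vertex leaving a graph of
treedepth at most `n`; only the empty graph has treedepth at most `0`. -/
def tdLE (G : SimpleGraph V) : ℕ → Set V → Prop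
  | 0, S => S = ∅
  | n+1, S => ∀ x ∈ S, ∃ v ∈ compIn G S x, tdLE G n (compIn G S x \ {v})

/-- The treedepth of the induced subgraph `G[S]`. -/
noncomputable def td (G : SimpleGraph V) (S : Set V) : ℕ :=
  sInf {n | tdLE G n S}

/-- `N_G(C)`: the set of vertices outside `C` having a neighbor in `C`. -/
def nbhd (G : SimpleGraph V) (C : Set V) : Set V :=
  {v | v ∉ C ∧ ∃ u ∈ C, G.Adj u v}

/-- `C` is a connected component of the induced subgraph `G[R]`. -/
def IsCompOf (G : SimpleGraph V) (R C : Set V) : Prop :=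
  ∃ x ∈ R, C = compIn G R x

/-- `S` is an `η`-treedepth deletion set of `G`: `td(G − S) ≤ η`. -/
def IsTDS (G : SimpleGraph V) (η : ℕ) (S : Set V) : Prop :=
  td G Sᶜ ≤ η

/-- `S` is a connected `η`-treedepth deletion set of `G`. -/
def IsCTDS (G : SimpleGraph V) (η : ℕ) (S : Set V) : Prop :=
  IsTDS G η S ∧ S.Nonempty ∧ (G.induce S).Connected

/-- A rooted forest with vertex set `A ⊆ V`, given by its (reflexive) ancestor relation:
`anc u v` means `u` is an ancestor of `v` (every vertex being an ancestor of itself). -/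
structure RootedForest (V : Type*) (A : Set V) where
  anc : V → V → Prop
  mem_left : ∀ {u v}, anc u v → u ∈ A
  mem_right : ∀ {u v}, anc u v → v ∈ A
  refl : ∀ v ∈ A, anc v v
  trans : ∀ {u v w}, anc u v → anc v w → anc u w
  antisymm : ∀ {u v}, anc u v → anc v u → u = v
  chain : ∀ {u w v}, anc u v → anc w v → anc u w ∨ anc w u

/-- Depth of a rooted forest: the maximum number of vertices on a root-to-leaf path,
i.e. the maximum number of ancestors of a vertex. -/
noncomputable def RootedForest.depth [Fintype V] {A : Set V} (F : RootedForest V A) : ℕ :=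
  Finset.univ.sup fun v : V => {u | F.anc u v}.ncard

/-- `F` is a treedepth decomposition of `G[A]`: the endpoints of every edge of `G[A]`
are in ancestor-descendant relation in `F`. -/
def IsTDDecompOn (G : SimpleGraph V) (A : Set V) (F : RootedForest V A) : Prop :=
  ∀ u v, u ∈ A → v ∈ A → G.Adj u v → F.anc u v ∨ F.anc v u

/-- `A` is an `(x,y)`-vertex cut in `G`: `A` avoids `x` and `y` and there is
no path from `x` to `y` in `G − A`. -/
def IsVertexCut (G : SimpleGraph V) (x y : V) (A : Set V) : Prop :=
  ∃ (hx : x ∈ Aᶜ) (hy : y ∈ Aᶜ), ¬ (G.induce Aᶜ).Reachable ⟨x, hx⟩ ⟨y, hy⟩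

/-- The weight of a subgraph: the sum of the weights of its edges. -/
noncomputable def subWeight (w : Sym2 V → ℕ) {G : SimpleGraph V} (T : G.Subgraph) : ℕ :=
  ∑ᶠ e ∈ T.edgeSet, w e

/-- The leaves (vertices with exactly one neighbor) of a subgraph. -/
def subLeaves {G : SimpleGraph V} (T : G.Subgraph) : Set V :=
  {v | (T.neighborSet v).ncard = 1}

/-- `T` is a Steiner tree for the terminal set `R` in `G`. -/
def IsSteinerTree (G : SimpleGraph V) (R : Set V) (T : G.Subgraph) : Prop :=
  T.coe.IsTree ∧ R ⊆ T.verts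

/-- `T` is a `t`-component for `R`: a tree with at most `t` leaves, all of which lie in `R`. -/
def IsTComponent (G : SimpleGraph V) (R : Set V) (t : ℕ) (T : G.Subgraph) : Prop :=
  T.coe.IsTree ∧ (subLeaves T).ncard ≤ t ∧ subLeaves T ⊆ R

/-!
Write `N i` for the set `N_G(C (i + 1)) ∩ X`. The increment `N i \ H i` has at least `d + η`
elements and `S` misses at most `η` of them, so `S` contains at least `d`. The increments are
pairwise disjoint, since `N i ⊆ H (i + 1)` and `H` only grows; summing over `i < ℓ`
gives `ℓ * d ≤ |S|`.
-/

section DisjointIncrements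

variable {α : Type*} {d : ℕ∞}

theorem le_encard_inter_of_add_le_encard {A S : Set α} {η : ℕ} (hA : d + η ≤ A.encard)
    (hAS : (A \ S).encard ≤ η) : d ≤ (A ∩ S).encard := by
  refine (ENat.add_le_add_iff_right (ENat.natCast_ne_top η)).1 ?_
  calc
    d + η ≤ A.encard := hA
    _ = (A ∩ S).encard + (A \ S).encard := by
      rw [add_comm, encard_sdiff_add_encard_inter]
    _ ≤ (A ∩ S).encard + η := by gcongr

theorem mul_le_encard_of_le_encard_sdiff {T : ℕ → Set α} {ℓ : ℕ}
    (hT : ∀ i < ℓ, T i ⊆ T (i + 1)) (hd : ∀ i < ℓ, d ≤ (T (i + 1) \ T i).encard) :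
    ℓ * d ≤ (T ℓ).encard := by
  induction ℓ with
  | zero => simp
  | succ n ih =>
    have ih' : n * d ≤ (T n).encard :=
      ih (fun i hi ↦ hT i (hi.trans n.lt_succ_self)) fun i hi ↦ hd i (hi.trans n.lt_succ_self)
    calc
      ((n + 1 : ℕ) : ℕ∞) * d = d + n * d := by push_cast; ring
      _ ≤ (T (n + 1) \ T n).encard + (T n).encard :=
        add_le_add (hd n n.lt_succ_self) ih'
      _ = (T (n + 1)).encard := encard_sdiff_add_encard_of_subset (hT n n.lt_succ_self)

theorem stmt5_general {S : Set α} {N H : ℕ → Set α} {η ℓ : ℕ}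
    (hmiss : ∀ i < ℓ, (N i \ S).encard ≤ η)
    (hstep : ∀ i < ℓ, H i ∪ N i ⊆ H (i + 1))
    (hbig : ∀ i < ℓ, d + η ≤ (N i \ H i).encard) :
    ℓ * d ≤ S.encard := by
  have hmono (i) (hi : i < ℓ) : H i ∩ S ⊆ H (i + 1) ∩ S :=
    inter_subset_inter_left S (subset_union_left.trans (hstep i hi))
  have hnew (i) (hi : i < ℓ) : (N i \ H i) ∩ S ⊆ (H (i + 1) ∩ S) \ (H i ∩ S) :=
    fun _ hx ↦ ⟨⟨hstep i hi (.inr hx.1.1), hx.2⟩, fun hxH ↦ hx.1.2 hxH.1⟩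
  have hcount (i) (hi : i < ℓ) : d ≤ ((N i \ H i) ∩ S).encard :=
    le_encard_inter_of_add_le_encard (hbig i hi) <|
      (encard_le_encard (sdiff_subset_sdiff_left sdiff_subset)).trans (hmiss i hi)
  calc
    ℓ * d ≤ (H ℓ ∩ S).encard :=
      mul_le_encard_of_le_encard_sdiff hmono fun i hi ↦
        (hcount i hi).trans (encard_le_encard (hnew i hi))
    _ ≤ S.encard := encard_le_encard inter_subset_right

end DisjointIncrements

/-- if `S` is an `η`-treedepth deletion set of size at most `k` missing at
most `η` vertices of `N_G(C) ∩ X` for every component `C` of `G[R]`, and `H 0 = ∅`,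
`H i = H (i-1) ∪ (N_G(C i) ∩ X)` with `|(N_G(C i) ∩ X) ∖ H (i-1)| > d + η` for
components `C 1, …, C ℓ` of `G[R]`, then `ℓ·d ≤ |S|`. -/
theorem stmt5 {V : Type*} [Fintype V] (G : SimpleGraph V) (η d k ℓ : ℕ) (hd : 1 ≤ d)
    (X R : Set V) (hRX : R ⊆ Xᶜ)
    (S : Set V) (hS : IsTDS G η S) (hSk : S.ncard ≤ k)
    (hmiss : ∀ C, IsCompOf G R C → ((nbhd G C ∩ X) \ S).ncard ≤ η)
    (C : ℕ → Set V) (hC : ∀ i, 1 ≤ i → i ≤ ℓ → IsCompOf G R (C i))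
    (H : ℕ → Set V) (hH0 : H 0 = ∅)
    (hHstep : ∀ i, 1 ≤ i → i ≤ ℓ → H i = H (i-1) ∪ (nbhd G (C i) ∩ X))
    (hbig : ∀ i, 1 ≤ i → i ≤ ℓ → d + η < ((nbhd G (C i) ∩ X) \ H (i-1)).ncard) :
    ℓ * d ≤ S.ncard := by
  have hbound := stmt5_general (d := d) (η := η) (ℓ := ℓ) (S := S) (H := H)
    (N := fun i ↦ nbhd G (C (i + 1)) ∩ X)
  simp only [← coe_ncard_eq_encard, ← Nat.cast_add, ← Nat.cast_mul, Nat.cast_le] at hbound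
  exact hbound (fun i hi ↦ hmiss _ (hC _ i.succ_pos hi)) (fun i hi ↦ (hHstep _ i.succ_pos hi).ge)
    fun i hi ↦ (hbig _ i.succ_pos hi).le
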